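/- Assume the finite-state Euler–Maruyama setting with multiplicative noise, the global Lipschitz condition with constant L, condition (H) with parameters c_0 and (β_i), the averaging condition Σ_i μ_i β_i < 0, and min{−q_ii/β_i : i ∈ S, β_i > 0} > 1; let η_2, ξ^{(2)}, ξ̂_2, ξ̄_2, β̂ be as in Theorem 3.4. On a probability space carrying an i.i.d. sequence (Z_k)_{k≥0} of standard Gaussian vectors in ℝ^m and an independent discrete-time Markov chain (J_k)_{k≥0} on S with one-step transition matrix exp(δQ) and J_0 = i, define for each x ∈ ℝⁿ the synchronously coupled Euler–Maruyama sequences Ȳ^x_0 = x, Ȳ^x_{k+1} = Ȳ^x_k + δ·b(Ȳ^x_k, J_k) + √δ·σ(Ȳ^x_k, J_k) Z_k. Then for every δ ∈ (0,1) with δ < (1/(32L²)) ∧ (η_2/β̂)², every x, y ∈ ℝⁿ, i ∈ S, and every k ≥ 0: E|Ȳ^x_k − Ȳ^y_k|² ≤ ξ̂_2 ξ̄_2 |x−y|² e^{−(η_2 − β̂ √δ) k δ}. -/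

import Mathlib

open MeasureTheory ProbabilityTheory

/-- `Q` has nonnegative off-diagonal entries and every row sums to zero
(a conservative Q-matrix). -/
def IsConservativeQMatrix {N : ℕ} (Q : Matrix (Fin N) (Fin N) ℝ) : Prop :=
  (∀ i j, i ≠ j → 0 ≤ Q i j) ∧ ∀ i, ∑ j, Q i j = 0

/-- Irreducibility: any two distinct states are connected by a finite chain of
transitions with strictly positive rates. -/
def MatrixIrreducible {N : ℕ} (Q : Matrix (Fin N) (Fin N) ℝ) : Prop :=
  ∀ i j : Fin N, i ≠ j → ∃ (k : ℕ) (c : ℕ → Fin N),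
    c 0 = i ∧ c k = j ∧ ∀ l < k, 0 < Q (c l) (c (l + 1))

/-- The set of real parts of the (complex) eigenvalues of a real matrix. -/
def spectrumRe {N : ℕ} (M : Matrix (Fin N) (Fin N) ℝ) : Set ℝ :=
  {x : ℝ | ∃ γ ∈ spectrum ℂ (M.map Complex.ofReal), γ.re = x}

/-- The matrix exponential `exp M = ∑ₖ Mᵏ/k!`. -/
noncomputable def matExp {N : ℕ} (M : Matrix (Fin N) (Fin N) ℝ) :
    Matrix (Fin N) (Fin N) ℝ :=
  ∑' k : ℕ, ((k.factorial : ℝ)⁻¹) • M ^ k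

/-- Standard Gaussian measure on `ℝ^m`. -/
noncomputable def stdGaussianPi (m : ℕ) : Measure (Fin m → ℝ) :=
  Measure.pi fun _ => gaussianReal 0 1

/-- The distribution on `Fin N` with weights given by row `i` of `P`. -/
noncomputable def rowMeasure {N : ℕ} (P : Matrix (Fin N) (Fin N) ℝ) (i : Fin N) :
    Measure (Fin N) :=
  ∑ j : Fin N, ENNReal.ofReal (P i j) • Measure.dirac j

/-- Hilbert–Schmidt norm of a real matrix. -/
noncomputable def hsNorm {n m : ℕ} (M : Matrix (Fin n) (Fin m) ℝ) : ℝ :=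
  Real.sqrt (∑ i, ∑ j, (M i j) ^ 2)

/-- One step of the Euler–Maruyama scheme as a transition kernel on `ℝⁿ × S`:
starting from `(x, i)`, the next state is
`(x + δ b(x,i) + √δ σ(x,i) Z, J)` with `Z` standard Gaussian on `ℝ^m` and
`J` distributed according to row `i` of `exp(δ Q)`, independently. -/
noncomputable def EMKernel {n m N : ℕ} (Q : Matrix (Fin N) (Fin N) ℝ)
    (b : EuclideanSpace ℝ (Fin n) → Fin N → EuclideanSpace ℝ (Fin n))
    (σ : EuclideanSpace ℝ (Fin n) → Fin N → Matrix (Fin n) (Fin m) ℝ)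
    (δ : ℝ) (q : EuclideanSpace ℝ (Fin n) × Fin N) :
    Measure (EuclideanSpace ℝ (Fin n) × Fin N) :=
  Measure.map
    (fun zj : (Fin m → ℝ) × Fin N =>
      (q.1 + δ • b q.1 q.2 +
        Real.sqrt δ • ((WithLp.equiv 2 (Fin n → ℝ)).symm ((σ q.1 q.2).mulVec zj.1)),
        zj.2))
    ((stdGaussianPi m).prod (rowMeasure (matExp (δ • Q)) q.2))

/-- `π` is an invariant measure of the kernel `K`. -/
def IsInvariantMeasure {α : Type*} [MeasurableSpace α] (K : α → Measure α)
    (π : Measure α) : Prop :=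
  ∀ A : Set α, MeasurableSet A → ∫⁻ q, K q A ∂π = π A



section MatrixPart

attribute [local instance] Matrix.linftyOpNormedRing Matrix.linftyOpNormedAlgebra

theorem matExp_eq {N : ℕ} (M : Matrix (Fin N) (Fin N) ℝ) : matExp M = NormedSpace.exp M := by
  rw [NormedSpace.exp_eq_tsum ℝ]; rfl

theorem matExp_hasDerivAt {N : ℕ} (Q : Matrix (Fin N) (Fin N) ℝ) (s : ℝ) (a c : Fin N) :
    HasDerivAt (fun u : ℝ => matExp (u • Q) a c) (∑ j, matExp (s • Q) a j * Q j c) s := by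
  have h := hasDerivAt_exp_smul_const (𝕂 := ℝ) Q s
  have h2 := ((LinearMap.toContinuousLinearMap
    (Matrix.entryLinearMap ℝ ℝ a c : Matrix (Fin N) (Fin N) ℝ →ₗ[ℝ] ℝ))).hasFDerivAt.comp_hasDerivAt s h
  simp only [matExp_eq]
  exact h2

theorem matExp_summable {N : ℕ} (M : Matrix (Fin N) (Fin N) ℝ) :
    Summable (fun k : ℕ => ((k.factorial : ℝ)⁻¹) • M ^ k) :=
  NormedSpace.expSeries_summable' (𝕂 := ℝ) M

theorem matExp_entry {N : ℕ} (M : Matrix (Fin N) (Fin N) ℝ) (a c : Fin N) :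
    matExp M a c = ∑' k : ℕ, ((k.factorial : ℝ)⁻¹) * (M ^ k) a c := by
  have h := (LinearMap.toContinuousLinearMap
    (Matrix.entryLinearMap ℝ ℝ a c : Matrix (Fin N) (Fin N) ℝ →ₗ[ℝ] ℝ)).map_tsum (matExp_summable M)
  exact h

theorem matExp_nonneg_of_nonneg {N : ℕ} (M : Matrix (Fin N) (Fin N) ℝ) (hM : ∀ a c, 0 ≤ M a c)
    (a c : Fin N) : 0 ≤ matExp M a c := by
  rw [matExp_entry]
  refine tsum_nonneg fun k => mul_nonneg (by positivity) ?_
  induction k generalizing a c with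
  | zero => simp only [pow_zero, Matrix.one_apply]; split_ifs <;> norm_num
  | succ k ih =>
    rw [pow_succ, Matrix.mul_apply]
    exact Finset.sum_nonneg fun j _ => mul_nonneg (ih a j) (hM j c)

end MatrixPart

theorem matExp_zero {N : ℕ} : matExp (0 : Matrix (Fin N) (Fin N) ℝ) = 1 := by
  rw [matExp_eq, NormedSpace.exp_zero]

theorem matExp_nonneg {N : ℕ} (Q : Matrix (Fin N) (Fin N) ℝ) (hQ : IsConservativeQMatrix Q)
    (q₀ : ℝ) (hq : ∀ i, -Q i i ≤ q₀) (s : ℝ) (hs : 0 ≤ s) (a c : Fin N) :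
    0 ≤ matExp (s • Q) a c := by
  have e : s • Q = (s • (Q + Matrix.diagonal fun _ => q₀)) + Matrix.diagonal (fun _ => -(s * q₀)) := by
    ext i j
    by_cases h : i = j
    · subst h; simp
    · simp [h]
  have hc : Commute (s • (Q + Matrix.diagonal fun _ => q₀))
      (Matrix.diagonal (fun _ : Fin N => -(s * q₀))) := by
    have : (Matrix.diagonal (fun _ : Fin N => -(s * q₀))) = (-(s*q₀)) • (1 : Matrix (Fin N) (Fin N) ℝ) := by
      ext i j
      by_cases h : i = j <;> simp [h]
    rw [this]
    exact (Commute.one_right (s • (Q + Matrix.diagonal fun _ => q₀))).smul_right (-(s * q₀))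
  rw [e, matExp_eq, Matrix.exp_add_of_commute _ _ hc, Matrix.exp_diagonal, Matrix.mul_diagonal,
    ← matExp_eq]
  refine mul_nonneg (matExp_nonneg_of_nonneg _ ?_ _ _) ?_
  · intro i j
    simp only [Matrix.smul_apply, Matrix.add_apply, smul_eq_mul]
    refine mul_nonneg hs ?_
    by_cases h : i = j
    · subst h; simp; linarith [hq i]
    · simp [h]; exact hQ.1 i j h
  · rw [Pi.coe_exp, ← Real.exp_eq_exp_ℝ]
    positivity

theorem matExp_rowsum {N : ℕ} (Q : Matrix (Fin N) (Fin N) ℝ) (hQ : IsConservativeQMatrix Q)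
    (s : ℝ) (a : Fin N) : ∑ c, matExp (s • Q) a c = 1 := by
  have hd : ∀ s, HasDerivAt (fun u : ℝ => ∑ c, matExp (u • Q) a c) 0 s := by
    intro s
    have h := HasDerivAt.fun_sum (u := Finset.univ) fun c _ => matExp_hasDerivAt Q s a c
    refine h.congr_deriv ?_
    rw [Finset.sum_comm]
    simp [← Finset.mul_sum, hQ.2]
  have := is_const_of_deriv_eq_zero (fun s => (hd s).differentiableAt) (fun s => (hd s).deriv) s 0
  refine this.trans ?_
  simp [matExp_zero, Matrix.one_apply]

theorem matExp_diag {N : ℕ} (Q : Matrix (Fin N) (Fin N) ℝ) (hQ : IsConservativeQMatrix Q)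
    (q₀ : ℝ) (hq : ∀ i, -Q i i ≤ q₀) (hq0 : 0 ≤ q₀) (s : ℝ) (hs : 0 ≤ s) (a : Fin N) :
    1 - matExp (s • Q) a a ≤ q₀ * s := by
  have hd : ∀ s, HasDerivAt (fun u : ℝ => matExp (u • Q) a a + q₀ * u)
      ((∑ j, matExp (s • Q) a j * Q j a) + q₀ * 1) s := fun s =>
    (matExp_hasDerivAt Q s a a).add ((hasDerivAt_id s).const_mul q₀)
  have hm : MonotoneOn (fun u : ℝ => matExp (u • Q) a a + q₀ * u) (Set.Ici 0) := by
    refine monotoneOn_of_deriv_nonneg (convex_Ici 0)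
      (fun s _ => (hd s).continuousAt.continuousWithinAt)
      (fun s _ => (hd s).differentiableAt.differentiableWithinAt) ?_
    intro s hs
    rw [interior_Ici] at hs
    have hs : 0 ≤ s := le_of_lt hs
    rw [(hd s).deriv]
    have hp := fun c => matExp_nonneg Q hQ q₀ hq s hs a c
    have h1 : matExp (s • Q) a a ≤ 1 := by
      rw [← matExp_rowsum Q hQ s a]
      exact Finset.single_le_sum (f := fun c => matExp (s • Q) a c) (fun c _ => hp c) (Finset.mem_univ a)
    have h2 : matExp (s • Q) a a * Q a a ≤ ∑ j, matExp (s • Q) a j * Q j a := by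
      rw [← Finset.add_sum_erase _ _ (Finset.mem_univ a)]
      have : 0 ≤ ∑ j ∈ Finset.univ.erase a, matExp (s • Q) a j * Q j a :=
        Finset.sum_nonneg fun j hj => mul_nonneg (hp j) (hQ.1 j a (Finset.ne_of_mem_erase hj))
      linarith
    nlinarith [hp a, hq a]
  have := hm (Set.mem_Ici.2 le_rfl) (Set.mem_Ici.2 hs) hs
  simp [matExp_zero] at this
  linarith

theorem matExp_mulVec_le {N : ℕ} (Q : Matrix (Fin N) (Fin N) ℝ) (hQ : IsConservativeQMatrix Q)
    (q₀ : ℝ) (hq : ∀ i, -Q i i ≤ q₀) (hq0 : 0 ≤ q₀) (β ξ : Fin N → ℝ) (η : ℝ)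
    (hξ : ∀ i, ∑ j, Q i j * ξ j = -(η + β i) * ξ i) (hξpos : ∀ i, 0 < ξ i)
    (ξhat ξbar β₀ : ℝ) (h1 : ∀ i, ξ i ≤ ξhat) (h2 : ∀ i, 1 ≤ ξ i * ξbar)
    (h3 : ∀ i, |β i| ≤ β₀) (s : ℝ) (hs : 0 ≤ s) (a : Fin N) :
    ∑ j, matExp (s • Q) a j * ξ j ≤
      ξ a * Real.exp (-((η + β a) * s - β₀ * q₀ * (ξhat * ξbar) * s ^ 2)) := by
  set C := β₀ * q₀ * (ξhat * ξbar) with hC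
  have hβ0 : 0 ≤ β₀ := (abs_nonneg _).trans (h3 a)
  have hhat : 0 < ξhat := (hξpos a).trans_le (h1 a)
  have hdu : ∀ s, HasDerivAt (fun u : ℝ => ∑ j, matExp (u • Q) a j * ξ j)
      (∑ j, matExp (s • Q) a j * (-(η + β j) * ξ j)) s := by
    intro s
    have h := HasDerivAt.fun_sum (u := Finset.univ) fun c _ => (matExp_hasDerivAt Q s a c).mul_const (ξ c)
    refine h.congr_deriv ?_
    simp only [← hξ, Finset.mul_sum, Finset.sum_mul]
    rw [Finset.sum_comm]
    simp only [mul_assoc]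
  have hde : ∀ s, HasDerivAt (fun u : ℝ => Real.exp ((η + β a) * u - C * u ^ 2))
      (Real.exp ((η + β a) * s - C * s ^ 2) * ((η + β a) - C * (2 * s))) s := by
    intro s
    have h := (((hasDerivAt_id s).const_mul (η + β a)).sub ((hasDerivAt_pow 2 s).const_mul C)).exp
    refine h.congr_deriv ?_
    simp only [Pi.sub_apply, id]
    norm_num
  have hd := fun s => (hdu s).mul (hde s)
  have key : AntitoneOn ((fun u : ℝ => ∑ j, matExp (u • Q) a j * ξ j) *
      fun u : ℝ => Real.exp ((η + β a) * u - C * u ^ 2)) (Set.Ici 0) := by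
    refine antitoneOn_of_deriv_nonpos (convex_Ici 0)
      (fun s _ => (hd s).continuousAt.continuousWithinAt)
      (fun s _ => (hd s).differentiableAt.differentiableWithinAt) ?_
    intro s hs
    rw [interior_Ici] at hs
    have hs : 0 ≤ s := le_of_lt hs
    rw [(hd s).deriv]
    have hp := fun c => matExp_nonneg Q hQ q₀ hq s hs a c
    have hdiag := matExp_diag Q hQ q₀ hq hq0 s hs a
    have hrow := matExp_rowsum Q hQ s a
    have hu : 1 ≤ (∑ j, matExp (s • Q) a j * ξ j) * ξbar := by
      rw [← hrow, Finset.sum_mul]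
      refine Finset.sum_le_sum fun j _ => ?_
      have := mul_le_mul_of_nonneg_left (h2 j) (hp j)
      linarith
    set u := ∑ j, matExp (s • Q) a j * ξ j with hudef
    have hsplit : ∑ j, matExp (s • Q) a j * (-(η + β j) * ξ j) =
        -(η + β a) * u + ∑ j, matExp (s • Q) a j * ((β a - β j) * ξ j) := by
      rw [hudef, Finset.mul_sum, ← Finset.sum_add_distrib]
      refine Finset.sum_congr rfl fun j _ => ?_
      ring
    have herr : ∑ j, matExp (s • Q) a j * ((β a - β j) * ξ j) ≤ 2 * β₀ * ξhat * (q₀ * s) := by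
      have hb : ∑ j, matExp (s • Q) a j * ((β a - β j) * ξ j) ≤
          ∑ j ∈ Finset.univ.erase a, matExp (s • Q) a j * (2 * β₀ * ξhat) := by
        rw [← Finset.add_sum_erase _ _ (Finset.mem_univ a)]
        simp only [sub_self, zero_mul, mul_zero, zero_add]
        refine Finset.sum_le_sum fun j _ => mul_le_mul_of_nonneg_left ?_ (hp j)
        have ha := abs_le.1 (h3 a)
        have hj := abs_le.1 (h3 j)
        exact mul_le_mul (by linarith) (h1 j) (hξpos j).le (by positivity)
      rw [← Finset.sum_mul] at hb
      have : ∑ j ∈ Finset.univ.erase a, matExp (s • Q) a j = 1 - matExp (s • Q) a a := by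
        rw [← hrow, ← Finset.add_sum_erase _ _ (Finset.mem_univ a)]; ring
      rw [this] at hb
      refine hb.trans ?_
      rw [mul_comm]
      exact mul_le_mul_of_nonneg_left hdiag (by positivity)
    have herr2 : 2 * β₀ * ξhat * (q₀ * s) ≤ C * (2 * s) * u := by
      have := mul_le_mul_of_nonneg_left hu (show 0 ≤ 2 * β₀ * ξhat * (q₀ * s) by positivity)
      rw [hC]; linarith
    rw [hsplit]
    have : (-(η + β a) * u + ∑ j, matExp (s • Q) a j * ((β a - β j) * ξ j)) *
        Real.exp ((η + β a) * s - C * s ^ 2) +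
        u * (Real.exp ((η + β a) * s - C * s ^ 2) * ((η + β a) - C * (2 * s))) =
        (∑ j, matExp (s • Q) a j * ((β a - β j) * ξ j) - C * (2 * s) * u) *
        Real.exp ((η + β a) * s - C * s ^ 2) := by ring
    rw [this]
    exact mul_nonpos_of_nonpos_of_nonneg (by linarith) (Real.exp_pos _).le
  have := key (Set.mem_Ici.2 le_rfl) (Set.mem_Ici.2 hs) hs
  simp [matExp_zero, Matrix.one_apply] at this
  rw [Real.exp_neg, ← div_eq_mul_inv, le_div_iff₀ (Real.exp_pos _)]
  exact this



theorem integral_gauss_mul {m : ℕ} (j k : Fin m) :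
    Integrable (fun z : Fin m → ℝ => z j * z k) (stdGaussianPi m) ∧
    ∫ z, z j * z k ∂(stdGaussianPi m) = if j = k then 1 else 0 := by
  have hmem : ∀ j : Fin m, MemLp (fun z : Fin m → ℝ => z j) 2 (stdGaussianPi m) := by
    intro j
    have h := (memLp_id_gaussianReal (μ := 0) (v := 1) 2).comp_measurePreserving
      (measurePreserving_eval (fun _ : Fin m => gaussianReal 0 1) j)
    exact h
  refine ⟨(hmem j).integrable_mul (hmem k), ?_⟩
  by_cases h : j = k
  · subst h
    simp only [if_true]
    have h2 : ∫ z : Fin m → ℝ, z j * z j ∂(stdGaussianPi m) = ∫ t : ℝ, t * t ∂(gaussianReal 0 1) := by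
      rw [← (measurePreserving_eval (fun _ : Fin m => gaussianReal 0 1) j).map_eq,
        integral_map (measurable_pi_apply j).aemeasurable (by fun_prop)]
      rfl
    rw [h2]
    have h3 := variance_fun_id_gaussianReal (μ := 0) (v := 1)
    rw [variance_eq_integral (by fun_prop)] at h3
    simp [integral_id_gaussianReal] at h3
    simpa [sq] using h3
  · have hi : iIndepFun (fun (i : Fin m) (z : Fin m → ℝ) => z i) (stdGaussianPi m) :=
      iIndepFun_pi (X := fun _ t => t) (fun _ => by fun_prop)
    have h0 : ∫ z : Fin m → ℝ, z j ∂(stdGaussianPi m) = 0 := by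
      have : ∫ t : ℝ, t ∂(gaussianReal 0 1) = 0 := integral_id_gaussianReal
      rw [← (measurePreserving_eval (fun _ : Fin m => gaussianReal 0 1) j).map_eq,
        integral_map (measurable_pi_apply j).aemeasurable (by fun_prop)] at this
      exact this
    rw [(hi.indepFun h).integral_fun_mul_eq_mul_integral
      (measurable_pi_apply j).aestronglyMeasurable (measurable_pi_apply k).aestronglyMeasurable, h0, if_neg h,
      zero_mul]

theorem integral_gauss_id {m : ℕ} (j : Fin m) :
    Integrable (fun z : Fin m → ℝ => z j) (stdGaussianPi m) ∧
    ∫ z, z j ∂(stdGaussianPi m) = 0 := by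
  constructor
  · have h := (memLp_id_gaussianReal (μ := 0) (v := 1) 1).comp_measurePreserving
      (measurePreserving_eval (fun _ : Fin m => gaussianReal 0 1) j)
    exact memLp_one_iff_integrable.1 h
  · have : ∫ t : ℝ, t ∂(gaussianReal 0 1) = 0 := integral_id_gaussianReal
    rw [← (measurePreserving_eval (fun _ : Fin m => gaussianReal 0 1) j).map_eq,
      integral_map (measurable_pi_apply j).aemeasurable (by fun_prop)] at this
    exact this

instance stdGaussianPi_prob (m : ℕ) : IsProbabilityMeasure (stdGaussianPi m) := by
  unfold stdGaussianPi; infer_instance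

theorem gauss_coord {m : ℕ} (a : ℝ) (v : Fin m → ℝ) :
    Integrable (fun z : Fin m → ℝ => (a + ∑ j, v j * z j) ^ 2) (stdGaussianPi m) ∧
    ∫ z, (a + ∑ j, v j * z j) ^ 2 ∂(stdGaussianPi m) = a ^ 2 + ∑ j, v j ^ 2 := by
  have e : (fun z : Fin m → ℝ => (a + ∑ j, v j * z j) ^ 2) = fun z =>
      (a ^ 2 + ∑ j, (2 * a * v j) * z j) + ∑ j, ∑ k, (v j * v k) * (z j * z k) := by
    funext z
    have h1 : (∑ j, v j * z j) ^ 2 = ∑ j, ∑ k, (v j * v k) * (z j * z k) := by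
      rw [sq, Finset.sum_mul_sum]
      refine Finset.sum_congr rfl fun j _ => Finset.sum_congr rfl fun k _ => by ring
    have h2 : ∑ j, (2 * a * v j) * z j = 2 * a * ∑ j, v j * z j := by
      rw [Finset.mul_sum]; refine Finset.sum_congr rfl fun j _ => by ring
    rw [← h1, h2]; ring
  have i1 : ∀ j ∈ Finset.univ, Integrable (fun z : Fin m → ℝ => (2 * a * v j) * z j) (stdGaussianPi m) :=
    fun j _ => (integral_gauss_id j).1.const_mul _
  have i2 : ∀ j : Fin m, ∀ k ∈ Finset.univ,
      Integrable (fun z : Fin m → ℝ => (v j * v k) * (z j * z k)) (stdGaussianPi m) :=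
    fun j k _ => (integral_gauss_mul j k).1.const_mul _
  have i3 : ∀ j ∈ Finset.univ,
      Integrable (fun z : Fin m → ℝ => ∑ k, (v j * v k) * (z j * z k)) (stdGaussianPi m) :=
    fun j _ => integrable_finsetSum _ (i2 j)
  have i4 : Integrable (fun z : Fin m → ℝ => a ^ 2 + ∑ j, (2 * a * v j) * z j) (stdGaussianPi m) :=
    (integrable_const _).add (integrable_finsetSum _ i1)
  have i5 : Integrable (fun z : Fin m → ℝ => ∑ j, ∑ k, (v j * v k) * (z j * z k)) (stdGaussianPi m) :=
    integrable_finsetSum _ i3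
  rw [e]
  refine ⟨i4.add i5, ?_⟩
  rw [integral_add i4 i5, integral_add (integrable_const _) (integrable_finsetSum _ i1),
    integral_finsetSum _ i1, integral_finsetSum _ i3]
  simp_rw [integral_finsetSum _ (i2 _), integral_const_mul, (integral_gauss_id _).2,
    (integral_gauss_mul _ _).2]
  simp [sq]

theorem hsNorm_sq {n m : ℕ} (M : Matrix (Fin n) (Fin m) ℝ) :
    hsNorm M ^ 2 = ∑ i, ∑ j, (M i j) ^ 2 := by
  unfold hsNorm
  rw [Real.sq_sqrt]
  positivity

theorem gauss_vec {n m : ℕ} (a : EuclideanSpace ℝ (Fin n)) (B : Matrix (Fin n) (Fin m) ℝ) (c : ℝ) :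
    ∫⁻ z, ENNReal.ofReal
      (‖a + c • ((WithLp.equiv 2 (Fin n → ℝ)).symm (B.mulVec z))‖ ^ 2) ∂(stdGaussianPi m) =
    ENNReal.ofReal (‖a‖ ^ 2 + c ^ 2 * hsNorm B ^ 2) := by
  have e : (fun z : Fin m → ℝ => ‖a + c • ((WithLp.equiv 2 (Fin n → ℝ)).symm (B.mulVec z))‖ ^ 2) =
      fun z => ∑ i, (a i + ∑ j, (c * B i j) * z j) ^ 2 := by
    funext z
    rw [EuclideanSpace.norm_sq_eq]
    refine Finset.sum_congr rfl fun i _ => ?_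
    simp [Matrix.mulVec, dotProduct, Finset.mul_sum, mul_assoc]
  have hi : ∀ i ∈ Finset.univ, Integrable (fun z : Fin m → ℝ => (a i + ∑ j, (c * B i j) * z j) ^ 2)
      (stdGaussianPi m) := fun i _ => (gauss_coord (a i) fun j => c * B i j).1
  rw [← ofReal_integral_eq_lintegral_ofReal, e, integral_finsetSum _ hi]
  · simp_rw [(gauss_coord _ _).2]
    congr 1
    rw [hsNorm_sq, EuclideanSpace.norm_sq_eq, Finset.sum_add_distrib]
    simp [Finset.mul_sum, mul_pow]
  · rw [e]; exact integrable_finsetSum _ hi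
  · exact Filter.Eventually.of_forall fun z => by positivity

/-- One Euler–Maruyama step. -/
noncomputable def emStep {n m N : ℕ}
    (b : EuclideanSpace ℝ (Fin n) → Fin N → EuclideanSpace ℝ (Fin n))
    (σ : EuclideanSpace ℝ (Fin n) → Fin N → Matrix (Fin n) (Fin m) ℝ)
    (δ : ℝ) (i : Fin N) (x : EuclideanSpace ℝ (Fin n)) (z : Fin m → ℝ) :
    EuclideanSpace ℝ (Fin n) :=
  x + δ • b x i + Real.sqrt δ • ((WithLp.equiv 2 (Fin n → ℝ)).symm ((σ x i).mulVec z))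

theorem emStep_contract {n m N : ℕ}
    (b : EuclideanSpace ℝ (Fin n) → Fin N → EuclideanSpace ℝ (Fin n))
    (σ : EuclideanSpace ℝ (Fin n) → Fin N → Matrix (Fin n) (Fin m) ℝ)
    (L : ℝ)
    (hLip : ∀ i x y, ‖b x i - b y i‖ + hsNorm (σ x i - σ y i) ≤ L * ‖x - y‖)
    (β : Fin N → ℝ)
    (hH2 : ∀ i x y, 2 * (inner ℝ (x - y) (b x i - b y i) : ℝ)
        + hsNorm (σ x i - σ y i) ^ 2 ≤ β i * ‖x - y‖ ^ 2)
    (δ : ℝ) (hδ0 : 0 < δ) (i : Fin N) (x y : EuclideanSpace ℝ (Fin n)) :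
    ∫⁻ z, ENNReal.ofReal (‖emStep b σ δ i x z - emStep b σ δ i y z‖ ^ 2) ∂(stdGaussianPi m) ≤
    ENNReal.ofReal (Real.exp (δ * β i + δ ^ 2 * L ^ 2)) * ENNReal.ofReal (‖x - y‖ ^ 2) := by
  have e : ∀ z, emStep b σ δ i x z - emStep b σ δ i y z =
      ((x - y) + δ • (b x i - b y i)) +
      Real.sqrt δ • ((WithLp.equiv 2 (Fin n → ℝ)).symm ((σ x i - σ y i).mulVec z)) := by
    intro z
    ext k
    simp [emStep, Matrix.sub_mulVec]
    ring
  simp_rw [e]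
  rw [gauss_vec, ← ENNReal.ofReal_mul (Real.exp_pos _).le, Real.sq_sqrt hδ0.le]
  refine ENNReal.ofReal_le_ofReal ?_
  rw [norm_add_sq_real, norm_smul, inner_smul_right, mul_pow, Real.norm_eq_abs, sq_abs]
  have h1 : ‖b x i - b y i‖ ≤ L * ‖x - y‖ := by
    have := hLip i x y
    have h : 0 ≤ hsNorm (σ x i - σ y i) := Real.sqrt_nonneg _
    linarith
  have h2 : ‖b x i - b y i‖ ^ 2 ≤ L ^ 2 * ‖x - y‖ ^ 2 := by
    rw [← mul_pow]; exact pow_le_pow_left₀ (norm_nonneg _) h1 2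
  have h3 := mul_le_mul_of_nonneg_left (hH2 i x y) hδ0.le
  have h4 := mul_le_mul_of_nonneg_left h2 (sq_nonneg δ)
  have h5 := mul_le_mul_of_nonneg_right (Real.add_one_le_exp (δ * β i + δ ^ 2 * L ^ 2))
    (sq_nonneg ‖x - y‖)
  nlinarith

theorem emStep_continuous {n m N : ℕ}
    (b : EuclideanSpace ℝ (Fin n) → Fin N → EuclideanSpace ℝ (Fin n))
    (σ : EuclideanSpace ℝ (Fin n) → Fin N → Matrix (Fin n) (Fin m) ℝ)
    (L : ℝ) (hL : 0 ≤ L)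
    (hLip : ∀ i x y, ‖b x i - b y i‖ + hsNorm (σ x i - σ y i) ≤ L * ‖x - y‖)
    (δ : ℝ) (i : Fin N) :
    Continuous (fun p : EuclideanSpace ℝ (Fin n) × (Fin m → ℝ) => emStep b σ δ i p.1 p.2) := by
  have hb : Continuous fun x => b x i := by
    refine (LipschitzWith.of_dist_le_mul (K := L.toNNReal) fun x y => ?_).continuous
    rw [dist_eq_norm, dist_eq_norm]
    have h : 0 ≤ hsNorm (σ x i - σ y i) := Real.sqrt_nonneg _
    have := hLip i x y
    rw [Real.coe_toNNReal _ hL]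
    linarith
  have hσ : Continuous fun x => σ x i := by
    refine continuous_matrix fun p q => ?_
    refine (LipschitzWith.of_dist_le_mul (K := L.toNNReal) fun x y => ?_).continuous
    rw [dist_eq_norm, dist_eq_norm, Real.norm_eq_abs]
    have h : |σ x i p q - σ y i p q| ≤ hsNorm (σ x i - σ y i) := by
      refine Real.abs_le_sqrt ?_
      refine le_trans ?_ (Finset.single_le_sum (f := fun p => ∑ q, ((σ x i - σ y i) p q) ^ 2)
        (fun p _ => Finset.sum_nonneg fun q _ => sq_nonneg _) (Finset.mem_univ p))
      exact Finset.single_le_sum (f := fun q => ((σ x i - σ y i) p q) ^ 2)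
        (fun q _ => sq_nonneg _) (Finset.mem_univ q)
    have := hLip i x y
    have := norm_nonneg (b x i - b y i)
    rw [Real.coe_toNNReal _ hL]
    linarith
  unfold emStep
  have h1 : Continuous fun p : EuclideanSpace ℝ (Fin n) × (Fin m → ℝ) => (σ p.1 i).mulVec p.2 :=
    (hσ.comp continuous_fst).matrix_mulVec continuous_snd
  have h2 : Continuous fun p : EuclideanSpace ℝ (Fin n) × (Fin m → ℝ) => b p.1 i :=
    hb.comp continuous_fst
  have h3 : Continuous fun p : EuclideanSpace ℝ (Fin n) × (Fin m → ℝ) =>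
      (WithLp.equiv 2 (Fin n → ℝ)).symm ((σ p.1 i).mulVec p.2) :=
    (PiLp.continuous_toLp 2 _).comp h1
  exact (continuous_fst.add (Continuous.smul (f := fun _ => δ) continuous_const h2)).add
    (Continuous.smul (f := fun _ => Real.sqrt δ) continuous_const h3)

/-- The Euler–Maruyama recursion along a deterministic path of states and noises. -/
noncomputable def pathY {n m N : ℕ}
    (b : EuclideanSpace ℝ (Fin n) → Fin N → EuclideanSpace ℝ (Fin n))
    (σ : EuclideanSpace ℝ (Fin n) → Fin N → Matrix (Fin n) (Fin m) ℝ)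
    (δ : ℝ) (j : ℕ → Fin N) (x : EuclideanSpace ℝ (Fin n)) (z : ℕ → Fin m → ℝ) :
    ℕ → EuclideanSpace ℝ (Fin n)
  | 0 => x
  | k + 1 => emStep b σ δ (j k) (pathY b σ δ j x z k) (z k)

theorem pathY_congr {n m N : ℕ}
    (b : EuclideanSpace ℝ (Fin n) → Fin N → EuclideanSpace ℝ (Fin n))
    (σ : EuclideanSpace ℝ (Fin n) → Fin N → Matrix (Fin n) (Fin m) ℝ)
    (δ : ℝ) (j j' : ℕ → Fin N) (x : EuclideanSpace ℝ (Fin n)) (z z' : ℕ → Fin m → ℝ) (k : ℕ)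
    (hj : ∀ l < k, j l = j' l) (hz : ∀ l < k, z l = z' l) :
    pathY b σ δ j x z k = pathY b σ δ j' x z' k := by
  induction k with
  | zero => rfl
  | succ k ih =>
    simp only [pathY]
    rw [ih (fun l hl => hj l (by omega)) (fun l hl => hz l (by omega)), hj k (by omega),
      hz k (by omega)]

theorem pathY_measurable {n m N : ℕ}
    (b : EuclideanSpace ℝ (Fin n) → Fin N → EuclideanSpace ℝ (Fin n))
    (σ : EuclideanSpace ℝ (Fin n) → Fin N → Matrix (Fin n) (Fin m) ℝ)
    (L : ℝ) (hL : 0 ≤ L)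
    (hLip : ∀ i x y, ‖b x i - b y i‖ + hsNorm (σ x i - σ y i) ≤ L * ‖x - y‖)
    (δ : ℝ) (j : ℕ → Fin N) (x : EuclideanSpace ℝ (Fin n)) (k : ℕ) :
    Measurable (fun z : ℕ → Fin m → ℝ => pathY b σ δ j x z k) := by
  induction k with
  | zero => exact measurable_const
  | succ k ih =>
    exact (emStep_continuous b σ L hL hLip δ (j k)).measurable.comp (ih.prodMk (measurable_pi_apply k))

theorem pathY_bound {n m N : ℕ}
    (b : EuclideanSpace ℝ (Fin n) → Fin N → EuclideanSpace ℝ (Fin n))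
    (σ : EuclideanSpace ℝ (Fin n) → Fin N → Matrix (Fin n) (Fin m) ℝ)
    (L : ℝ) (hL : 0 ≤ L)
    (hLip : ∀ i x y, ‖b x i - b y i‖ + hsNorm (σ x i - σ y i) ≤ L * ‖x - y‖)
    (β : Fin N → ℝ)
    (hH2 : ∀ i x y, 2 * (inner ℝ (x - y) (b x i - b y i) : ℝ)
        + hsNorm (σ x i - σ y i) ^ 2 ≤ β i * ‖x - y‖ ^ 2)
    (δ : ℝ) (hδ0 : 0 < δ)
    {Ω : Type*} [MeasurableSpace Ω] (P : Measure Ω) [IsProbabilityMeasure P]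
    (Z : ℕ → Ω → (Fin m → ℝ))
    (hZmeas : ∀ k, Measurable (Z k))
    (hZindep : iIndepFun Z P)
    (hZlaw : ∀ k, Measure.map (Z k) P = stdGaussianPi m)
    (j : ℕ → Fin N) (x y : EuclideanSpace ℝ (Fin n)) (k : ℕ) :
    ∫⁻ ω, ENNReal.ofReal (‖pathY b σ δ j x (fun l => Z l ω) k
        - pathY b σ δ j y (fun l => Z l ω) k‖ ^ 2) ∂P ≤
      ENNReal.ofReal ((∏ l ∈ Finset.range k, Real.exp (δ * β (j l) + δ ^ 2 * L ^ 2)) *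
        ‖x - y‖ ^ 2) := by
  induction k with
  | zero => simp [pathY]
  | succ k ih =>
    set X : Ω → EuclideanSpace ℝ (Fin n) × EuclideanSpace ℝ (Fin n) := fun ω =>
      (pathY b σ δ j x (fun l => Z l ω) k, pathY b σ δ j y (fun l => Z l ω) k) with hX
    have hZm : Measurable fun ω l => Z l ω := measurable_pi_lambda _ hZmeas
    have hXm : Measurable X :=
      ((pathY_measurable b σ L hL hLip δ j x k).comp hZm).prodMk
        ((pathY_measurable b σ L hL hLip δ j y k).comp hZm)
    have hind : IndepFun X (Z k) P := by
      have h := hZindep.indepFun_finset (Finset.range k) {k} (by simp) hZmeas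
      set ext : ((l : Finset.range k) → (Fin m → ℝ)) → ℕ → Fin m → ℝ :=
        fun w l => if h : l ∈ Finset.range k then w ⟨l, h⟩ else 0 with hext
      have hextm : Measurable ext := by
        refine measurable_pi_lambda _ fun l => ?_
        by_cases h : l ∈ Finset.range k
        · simp only [hext, h, dif_pos]; exact measurable_pi_apply _
        · simp only [hext, h, dif_neg, not_false_eq_true]; exact measurable_const
      have hψ : Measurable (fun w : (l : ({k} : Finset ℕ)) → (Fin m → ℝ) => w ⟨k, by simp⟩) :=
        measurable_pi_apply _
      have h2 := h.comp
        (φ := fun w => (pathY b σ δ j x (ext w) k, pathY b σ δ j y (ext w) k))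
        (ψ := fun w : (l : ({k} : Finset ℕ)) → (Fin m → ℝ) => w ⟨k, by simp⟩)
        (((pathY_measurable b σ L hL hLip δ j x k).comp hextm).prodMk
        ((pathY_measurable b σ L hL hLip δ j y k).comp hextm)) hψ
      have e : X = (fun w => (pathY b σ δ j x (ext w) k, pathY b σ δ j y (ext w) k)) ∘
          (fun ω (l : Finset.range k) => Z l ω) := by
        funext ω
        simp only [hX, Function.comp]
        rw [pathY_congr b σ δ j j x (fun l => Z l ω) (ext fun l => Z l ω) k (fun _ _ => rfl)
          (fun l hl => by simp [hext, hl]),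
          pathY_congr b σ δ j j y (fun l => Z l ω) (ext fun l => Z l ω) k (fun _ _ => rfl)
          (fun l hl => by simp [hext, hl])]
      rw [e]
      exact h2
    have hmap := (indepFun_iff_map_prod_eq_prod_map_map hXm.aemeasurable (hZmeas k).aemeasurable).1 hind
    have hc := emStep_continuous b σ L hL hLip δ (j k)
    set G : (EuclideanSpace ℝ (Fin n) × EuclideanSpace ℝ (Fin n)) × (Fin m → ℝ) → ENNReal :=
      fun p => ENNReal.ofReal (‖emStep b σ δ (j k) p.1.1 p.2 - emStep b σ δ (j k) p.1.2 p.2‖ ^ 2)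
      with hG
    have hGm : Measurable G := by
      have c1 : Continuous fun p : (EuclideanSpace ℝ (Fin n) × EuclideanSpace ℝ (Fin n)) ×
        (Fin m → ℝ) => emStep b σ δ (j k) p.1.1 p.2 :=
        hc.comp ((continuous_fst.comp continuous_fst).prodMk continuous_snd)
      have c2 : Continuous fun p : (EuclideanSpace ℝ (Fin n) × EuclideanSpace ℝ (Fin n)) ×
        (Fin m → ℝ) => emStep b σ δ (j k) p.1.2 p.2 :=
        hc.comp ((continuous_snd.comp continuous_fst).prodMk continuous_snd)
      exact (((c1.sub c2).norm).pow 2).measurable.ennreal_ofReal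
    calc ∫⁻ ω, ENNReal.ofReal (‖pathY b σ δ j x (fun l => Z l ω) (k + 1)
        - pathY b σ δ j y (fun l => Z l ω) (k + 1)‖ ^ 2) ∂P
        = ∫⁻ ω, G (X ω, Z k ω) ∂P := rfl
      _ = ∫⁻ p, G p ∂((P.map X).prod (P.map (Z k))) := by
        rw [← hmap, lintegral_map hGm (hXm.prodMk (hZmeas k))]
      _ = ∫⁻ a, ∫⁻ z, G (a, z) ∂(stdGaussianPi m) ∂(P.map X) := by
        rw [hZlaw, lintegral_prod _ hGm.aemeasurable]
      _ ≤ ∫⁻ a, ENNReal.ofReal (Real.exp (δ * β (j k) + δ ^ 2 * L ^ 2)) *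
          ENNReal.ofReal (‖a.1 - a.2‖ ^ 2) ∂(P.map X) :=
        lintegral_mono fun a => emStep_contract b σ L hLip β hH2 δ hδ0 (j k) a.1 a.2
      _ = ENNReal.ofReal (Real.exp (δ * β (j k) + δ ^ 2 * L ^ 2)) *
          ∫⁻ ω, ENNReal.ofReal (‖(X ω).1 - (X ω).2‖ ^ 2) ∂P := by
        rw [lintegral_const_mul _ (by fun_prop), lintegral_map (by fun_prop) hXm]
      _ ≤ ENNReal.ofReal (Real.exp (δ * β (j k) + δ ^ 2 * L ^ 2)) *
          ENNReal.ofReal ((∏ l ∈ Finset.range k, Real.exp (δ * β (j l) + δ ^ 2 * L ^ 2)) *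
        ‖x - y‖ ^ 2) := by gcongr
      _ = _ := by
        rw [← ENNReal.ofReal_mul (Real.exp_pos _).le, Finset.prod_range_succ]
        congr 1; ring

/-- Extend a finite path to a sequence. -/
def extPath {N : ℕ} (i : Fin N) (k : ℕ) (p : Fin (k + 1) → Fin N) : ℕ → Fin N :=
  fun l => if h : l < k + 1 then p ⟨l, h⟩ else i

theorem path_sum_le {N : ℕ} (i : Fin N) (T : Fin N → Fin N → ℝ) (hT : ∀ a c, 0 ≤ T a c)
    (w ξ : Fin N → ℝ) (hw : ∀ a, 0 ≤ w a) (ρ : ℝ) (hρ : 0 ≤ ρ)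
    (h : ∀ a, w a * ∑ c, T a c * ξ c ≤ ρ * ξ a) (k : ℕ) :
    ∑ p : Fin (k + 1) → Fin N, ((if extPath i k p 0 = i then (1 : ℝ) else 0) *
      ∏ l ∈ Finset.range k, T (extPath i k p l) (extPath i k p (l + 1))) *
      (∏ l ∈ Finset.range k, w (extPath i k p l)) * ξ (extPath i k p k) ≤ ρ ^ k * ξ i := by
  induction k with
  | zero =>
    rw [← (Equiv.funUnique (Fin 1) (Fin N)).symm.sum_comp]
    simp [extPath]
  | succ k ih =>
    rw [← (Fin.snocEquiv (fun _ : Fin (k + 1 + 1) => Fin N)).sum_comp, Fintype.sum_prod_type_right]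
    have h1 : ∀ (p : Fin (k + 1) → Fin N) (c : Fin N), ∀ l < k + 1,
        extPath i (k + 1) (Fin.snocEquiv (fun _ : Fin (k + 1 + 1) => Fin N) (c, p)) l =
        extPath i k p l := by
      intro p c l hl
      simp only [extPath, Fin.snocEquiv, Equiv.coe_fn_mk, hl, dif_pos, show l < k + 1 + 1 by omega]
      exact Fin.snoc_castSucc (α := fun _ => Fin N) c p ⟨l, hl⟩
    have h2 : ∀ (p : Fin (k + 1) → Fin N) (c : Fin N),
        extPath i (k + 1) (Fin.snocEquiv (fun _ : Fin (k + 1 + 1) => Fin N) (c, p)) (k + 1) = c := by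
      intro p c
      simp only [extPath, Fin.snocEquiv, Equiv.coe_fn_mk, dif_pos, show k + 1 < k + 1 + 1 by omega]
      exact Fin.snoc_last (α := fun _ => Fin N) c p
    calc _ = ∑ p : Fin (k + 1) → Fin N, ∑ c, (((if extPath i k p 0 = i then (1 : ℝ) else 0) *
      ∏ l ∈ Finset.range k, T (extPath i k p l) (extPath i k p (l + 1))) *
      (∏ l ∈ Finset.range k, w (extPath i k p l))) * (w (extPath i k p k) * (T (extPath i k p k) c * ξ c)) := by
          refine Finset.sum_congr rfl fun p _ => Finset.sum_congr rfl fun c _ => ?_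
          rw [Finset.prod_range_succ, Finset.prod_range_succ, h2, h1 p c 0 (by omega),
            h1 p c k (by omega)]
          have e1 := Finset.prod_congr (M := ℝ) (s₁ := Finset.range k) rfl
            (g := fun l => T (extPath i k p l) (extPath i k p (l + 1)))
            (f := fun l => T (extPath i (k + 1) (Fin.snocEquiv (fun _ => Fin N) (c, p)) l)
              (extPath i (k + 1) (Fin.snocEquiv (fun _ => Fin N) (c, p)) (l + 1)))
            (fun l hl => by
              have := Finset.mem_range.1 hl
              rw [h1 p c l (by omega), h1 p c (l + 1) (by omega)])
          have e2 := Finset.prod_congr (M := ℝ) (s₁ := Finset.range k) rfl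
            (g := fun l => w (extPath i k p l))
            (f := fun l => w (extPath i (k + 1) (Fin.snocEquiv (fun _ => Fin N) (c, p)) l))
            (fun l hl => by
              have := Finset.mem_range.1 hl
              rw [h1 p c l (by omega)])
          rw [e1, e2]
          ring
      _ ≤ ∑ p : Fin (k + 1) → Fin N, (((if extPath i k p 0 = i then (1 : ℝ) else 0) *
      ∏ l ∈ Finset.range k, T (extPath i k p l) (extPath i k p (l + 1))) *
      (∏ l ∈ Finset.range k, w (extPath i k p l))) * (ρ * ξ (extPath i k p k)) := by
          refine Finset.sum_le_sum fun p _ => ?_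
          rw [← Finset.mul_sum, ← Finset.mul_sum]
          refine mul_le_mul_of_nonneg_left (h _) ?_
          refine mul_nonneg (mul_nonneg (by split_ifs <;> norm_num) ?_) ?_
          · exact Finset.prod_nonneg fun l _ => hT _ _
          · exact Finset.prod_nonneg fun l _ => hw _
      _ = ρ * ∑ p : Fin (k + 1) → Fin N, ((if extPath i k p 0 = i then (1 : ℝ) else 0) *
      ∏ l ∈ Finset.range k, T (extPath i k p l) (extPath i k p (l + 1))) *
      (∏ l ∈ Finset.range k, w (extPath i k p l)) * ξ (extPath i k p k) := by
          rw [Finset.mul_sum]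
          refine Finset.sum_congr rfl fun p _ => by ring
      _ ≤ ρ * (ρ ^ k * ξ i) := mul_le_mul_of_nonneg_left ih hρ
      _ = _ := by ring


theorem stmt10 {n m N : ℕ} (hN : 2 ≤ N)
    (Q : Matrix (Fin N) (Fin N) ℝ)
    (hQ : IsConservativeQMatrix Q) (hirr : MatrixIrreducible Q)
    (μ : Fin N → ℝ) (hμpos : ∀ i, 0 < μ i) (hμsum : ∑ i, μ i = 1)
    (hμstat : ∀ j, ∑ i, μ i * Q i j = 0)
    (b : EuclideanSpace ℝ (Fin n) → Fin N → EuclideanSpace ℝ (Fin n))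
    (σ : EuclideanSpace ℝ (Fin n) → Fin N → Matrix (Fin n) (Fin m) ℝ)
    -- global Lipschitz condition
    (L : ℝ) (hL : 0 ≤ L)
    (hLip : ∀ i x y, ‖b x i - b y i‖ + hsNorm (σ x i - σ y i) ≤ L * ‖x - y‖)
    -- condition (H)
    (c₀ : ℝ) (hc₀ : 0 < c₀) (β : Fin N → ℝ)
    (hH1 : ∀ i x, 2 * (inner ℝ x (b x i) : ℝ) + hsNorm (σ x i) ^ 2 ≤ c₀ + β i * ‖x‖ ^ 2)
    (hH2 : ∀ i x y, 2 * (inner ℝ (x - y) (b x i - b y i) : ℝ)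
        + hsNorm (σ x i - σ y i) ^ 2 ≤ β i * ‖x - y‖ ^ 2)
    -- averaging condition and the condition `min{-q_ii/β_i : β_i > 0} > 1`
    (havg : ∑ i, μ i * β i < 0)
    (hmin : ∀ i, 0 < β i → 1 < -Q i i / β i)
    -- `η₂` and the Perron–Frobenius eigenvector `ξ` of `Q₂ = Q + diag(β)`
    (η₂ : ℝ)
    (hη : IsGreatest (spectrumRe (Q + Matrix.diagonal β)) (-η₂))
    (ξ : Fin N → ℝ) (hξpos : ∀ i, 0 < ξ i)
    (hξeig : (Q + Matrix.diagonal β).mulVec ξ = (-η₂) • ξ)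
    -- the constants of Theorem 3.4
    (ξhat ξbar β₀ q₀ βhat : ℝ)
    (hξhat : IsGreatest (Set.range ξ) ξhat)
    (hξbar : IsLeast (Set.range ξ) ξbar⁻¹)
    (hβ₀ : IsGreatest (Set.range fun i => |β i|) β₀)
    (hq₀ : IsGreatest (Set.range fun i => -Q i i) q₀)
    (hβhat : βhat = ((1 + 12 * q₀) * β₀ + 8 * L ^ 2 * (5 + 6 * β₀)) * ξhat * ξbar)
    -- the stepsize
    (δ : ℝ) (hδ0 : 0 < δ) (hδ1 : δ < 1)
    (hδ : δ < min (1 / (32 * L ^ 2)) ((η₂ / βhat) ^ 2))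
    -- the driving randomness : i.i.d. standard Gaussian vectors `Z` and an
    -- independent Markov chain `J` with one-step transition matrix `exp(δ Q)`
    -- started at `i`
    (Ω : Type*) [MeasurableSpace Ω] (P : Measure Ω) [IsProbabilityMeasure P]
    (i : Fin N)
    (Z : ℕ → Ω → (Fin m → ℝ)) (J : ℕ → Ω → Fin N)
    (hZmeas : ∀ k, Measurable (Z k)) (hJmeas : ∀ k, Measurable (J k))
    (hZindep : iIndepFun Z P)
    (hZlaw : ∀ k, Measure.map (Z k) P = stdGaussianPi m)
    (hJchain : ∀ (k : ℕ) (j : ℕ → Fin N),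
      P {ω | ∀ l ≤ k, J l ω = j l} =
        ENNReal.ofReal ((if j 0 = i then (1 : ℝ) else 0) *
          ∏ l ∈ Finset.range k, matExp (δ • Q) (j l) (j (l + 1))))
    (hZJindep : IndepFun (fun ω l => Z l ω) (fun ω l => J l ω) P)
    -- the synchronously coupled Euler–Maruyama sequences
    (Ybar : EuclideanSpace ℝ (Fin n) → ℕ → Ω → EuclideanSpace ℝ (Fin n))
    (hY0 : ∀ x ω, Ybar x 0 ω = x)
    (hYrec : ∀ x k ω, Ybar x (k + 1) ω =
      Ybar x k ω + δ • b (Ybar x k ω) (J k ω) +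
        Real.sqrt δ •
          ((WithLp.equiv 2 (Fin n → ℝ)).symm
            ((σ (Ybar x k ω) (J k ω)).mulVec (Z k ω)))) :
    ∀ (x y : EuclideanSpace ℝ (Fin n)) (k : ℕ),
      ∫ ω, ‖Ybar x k ω - Ybar y k ω‖ ^ 2 ∂P ≤
        ξhat * ξbar * ‖x - y‖ ^ 2 *
          Real.exp (-((η₂ - βhat * Real.sqrt δ) * k * δ)) := by
  have hξbar_pos : 0 < ξbar := by
    obtain ⟨j, hj⟩ := hξbar.1
    exact inv_pos.1 (hj ▸ hξpos j)
  have hbar2 : ∀ a, 1 ≤ ξ a * ξbar := by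
    intro a
    have h := hξbar.2 ⟨a, rfl⟩
    have := mul_le_mul_of_nonneg_right h hξbar_pos.le
    rwa [inv_mul_cancel₀ hξbar_pos.ne'] at this
  have hhat : ∀ a, ξ a ≤ ξhat := fun a => hξhat.2 ⟨a, rfl⟩
  have hβ₀' : ∀ a, |β a| ≤ β₀ := fun a => hβ₀.2 ⟨a, rfl⟩
  have hq : ∀ a, -Q a a ≤ q₀ := fun a => hq₀.2 ⟨a, rfl⟩
  have hq0 : 0 ≤ q₀ := by
    have h1 := hQ.2 i
    rw [← Finset.add_sum_erase _ _ (Finset.mem_univ i)] at h1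
    have : 0 ≤ ∑ j ∈ Finset.univ.erase i, Q i j :=
      Finset.sum_nonneg fun j hj => hQ.1 i j (Finset.ne_of_mem_erase hj).symm
    linarith [hq i]
  have hβ0 : 0 ≤ β₀ := (abs_nonneg _).trans (hβ₀' i)
  have hhat0 : 0 < ξhat := (hξpos i).trans_le (hhat i)
  have hξ' : ∀ a, ∑ j, Q a j * ξ j = -(η₂ + β a) * ξ a := by
    intro a
    have h := congrFun hξeig a
    simp only [Matrix.add_mulVec, Pi.add_apply, Matrix.mulVec_diagonal, Pi.smul_apply,
      smul_eq_mul] at h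
    simp only [Matrix.mulVec, dotProduct] at h
    linarith
  have hκ : 1 ≤ ξhat * ξbar :=
    (hbar2 i).trans (mul_le_mul_of_nonneg_right (hhat i) hξbar_pos.le)
  set ρ := Real.exp (-((η₂ - βhat * Real.sqrt δ) * δ)) with hρ
  have hstep : ∀ a, Real.exp (δ * β a + δ ^ 2 * L ^ 2) * ∑ c, matExp (δ • Q) a c * ξ c ≤
      ρ * ξ a := by
    intro a
    have h := matExp_mulVec_le Q hQ q₀ hq hq0 β ξ η₂ hξ' hξpos ξhat ξbar β₀ hhat hbar2 hβ₀' δ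
      hδ0.le a
    refine (mul_le_mul_of_nonneg_left h (Real.exp_pos _).le).trans ?_
    rw [mul_left_comm, ← Real.exp_add, mul_comm (ξ a)]
    refine mul_le_mul_of_nonneg_right (Real.exp_le_exp.2 ?_) (hξpos a).le
    have hsq : δ ≤ Real.sqrt δ := by
      refine Real.le_sqrt_of_sq_le ?_
      nlinarith
    have hA : L ^ 2 + β₀ * q₀ * (ξhat * ξbar) ≤ βhat := by
      have hL2 := sq_nonneg L
      have h1 : L ^ 2 * 1 ≤ L ^ 2 * (ξhat * ξbar) := mul_le_mul_of_nonneg_left hκ hL2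
      have h2 : 0 ≤ (β₀ + 11 * (q₀ * β₀) + 39 * L ^ 2 + 48 * (L ^ 2 * β₀)) * (ξhat * ξbar) := by
        positivity
      rw [hβhat]
      linarith
    have hA0 : 0 ≤ L ^ 2 + β₀ * q₀ * (ξhat * ξbar) := by positivity
    have h3 : (L ^ 2 + β₀ * q₀ * (ξhat * ξbar)) * δ ≤ βhat * Real.sqrt δ :=
      mul_le_mul hA hsq hδ0.le (hA0.trans hA)
    have h4 := mul_le_mul_of_nonneg_right h3 hδ0.le
    linarith
  intro x y k
  have hρk : Real.exp (-((η₂ - βhat * Real.sqrt δ) * k * δ)) = ρ ^ k := by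
    rw [hρ, ← Real.exp_nat_mul]
    congr 1
    ring
  rw [hρk]
  have hR : 0 ≤ ξhat * ξbar * ‖x - y‖ ^ 2 * ρ ^ k := by positivity
  have hYpath : ∀ x k ω, Ybar x k ω = pathY b σ δ (fun l => J l ω) x (fun l => Z l ω) k := by
    intro x k ω
    induction k with
    | zero => exact hY0 x ω
    | succ k ih => rw [hYrec, ih]; rfl
  have hTnn : ∀ a c, 0 ≤ matExp (δ • Q) a c := matExp_nonneg Q hQ q₀ hq δ hδ0.le
  have hZm : Measurable fun ω l => Z l ω := measurable_pi_lambda _ hZmeas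
  have hJm : Measurable fun ω l => J l ω := measurable_pi_lambda _ hJmeas
  -- bound of the lower integral
  have hmain : ∫⁻ ω, ENNReal.ofReal (‖Ybar x k ω - Ybar y k ω‖ ^ 2) ∂P ≤
      ENNReal.ofReal (ξhat * ξbar * ‖x - y‖ ^ 2 * ρ ^ k) := by
    set f : (Fin (k + 1) → Fin N) → (ℕ → Fin m → ℝ) → ENNReal := fun p z =>
      ENNReal.ofReal (‖pathY b σ δ (extPath i k p) x z k
        - pathY b σ δ (extPath i k p) y z k‖ ^ 2) with hf
    set A : (Fin (k + 1) → Fin N) → Set (ℕ → Fin N) := fun p =>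
      {j | ∀ l ≤ k, j l = extPath i k p l} with hA
    have hAm : ∀ p, MeasurableSet (A p) := by
      intro p
      have : A p = ⋂ l, ⋂ (_ : l ≤ k), (fun j : ℕ → Fin N => j l) ⁻¹' {extPath i k p l} := by
        ext j; simp [hA]
      rw [this]
      exact MeasurableSet.iInter fun l => MeasurableSet.iInter fun _ =>
        (measurable_pi_apply l) (measurableSet_singleton _)
    set g : (Fin (k + 1) → Fin N) → (ℕ → Fin N) → ENNReal := fun p => (A p).indicator 1 with hg
    have hgm : ∀ p, Measurable (g p) := fun p => measurable_one.indicator (hAm p)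
    have hfm : ∀ p, Measurable (f p) := fun p =>
      ((((pathY_measurable b σ L hL hLip δ (extPath i k p) x k).sub
        (pathY_measurable b σ L hL hLip δ (extPath i k p) y k)).norm).pow_const 2).ennreal_ofReal
    have hpt : ∀ ω, ENNReal.ofReal (‖Ybar x k ω - Ybar y k ω‖ ^ 2) ≤
        ∑ p, f p (fun l => Z l ω) * g p (fun l => J l ω) := by
      intro ω
      set p₀ : Fin (k + 1) → Fin N := fun l => J l ω with hp₀
      have hp : ∀ l ≤ k, J l ω = extPath i k p₀ l := by
        intro l hl
        simp [extPath, hp₀, show l < k + 1 by omega]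
      refine le_trans (le_of_eq ?_) (Finset.single_le_sum
        (f := fun p => f p (fun l => Z l ω) * g p (fun l => J l ω))
        (fun p _ => zero_le) (Finset.mem_univ p₀))
      have hmem : (fun l => J l ω) ∈ A p₀ := hp
      simp only [hg, Set.indicator_of_mem hmem, Pi.one_apply, mul_one, hf]
      rw [hYpath, hYpath,
        pathY_congr b σ δ _ (extPath i k p₀) x _ _ k (fun l hl => hp l hl.le) (fun _ _ => rfl),
        pathY_congr b σ δ _ (extPath i k p₀) y _ _ k (fun l hl => hp l hl.le) (fun _ _ => rfl)]
    have hterm : ∀ p, ∫⁻ ω, f p (fun l => Z l ω) * g p (fun l => J l ω) ∂P ≤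
        ENNReal.ofReal ((((if extPath i k p 0 = i then (1 : ℝ) else 0) *
          ∏ l ∈ Finset.range k, matExp (δ • Q) (extPath i k p l) (extPath i k p (l + 1))) *
          (∏ l ∈ Finset.range k, Real.exp (δ * β (extPath i k p l) + δ ^ 2 * L ^ 2)) *
          ξ (extPath i k p k)) * (ξbar * ‖x - y‖ ^ 2)) := by
      intro p
      have hi := lintegral_mul_eq_lintegral_mul_lintegral_of_indepFun
        ((hfm p).comp hZm) ((hgm p).comp hJm) (hZJindep.comp (hfm p) (hgm p))
      have h1 : ∫⁻ ω, (g p ∘ fun ω l => J l ω) ω ∂P =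
          ENNReal.ofReal ((if extPath i k p 0 = i then (1 : ℝ) else 0) *
          ∏ l ∈ Finset.range k, matExp (δ • Q) (extPath i k p l) (extPath i k p (l + 1))) := by
        rw [← hJchain k (extPath i k p)]
        have e : (g p ∘ fun ω l => J l ω) =
            Set.indicator {ω | ∀ l ≤ k, J l ω = extPath i k p l} 1 := by
          funext ω
          simp only [hg, Function.comp, Set.indicator, hA, Set.mem_ofPred_eq, Pi.one_apply]
        rw [e, lintegral_indicator_one]
        exact hJm (hAm p)
      have h2 := pathY_bound b σ L hL hLip β hH2 δ hδ0 P Z hZmeas hZindep hZlaw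
        (extPath i k p) x y k
      refine (le_of_eq hi).trans ?_
      rw [h1]
      refine (mul_le_mul_left h2 _).trans ?_
      have hw : 0 ≤ (if extPath i k p 0 = i then (1 : ℝ) else 0) *
          ∏ l ∈ Finset.range k, matExp (δ • Q) (extPath i k p l) (extPath i k p (l + 1)) :=
        mul_nonneg (by split_ifs <;> norm_num) (Finset.prod_nonneg fun l _ => hTnn _ _)
      have hE : 0 ≤ ∏ l ∈ Finset.range k, Real.exp (δ * β (extPath i k p l) + δ ^ 2 * L ^ 2) :=
        Finset.prod_nonneg fun l _ => (Real.exp_pos _).le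
      rw [← ENNReal.ofReal_mul (by positivity)]
      refine ENNReal.ofReal_le_ofReal ?_
      have h5 := mul_le_mul_of_nonneg_left (hbar2 (extPath i k p k))
        (mul_nonneg (mul_nonneg hw hE) (sq_nonneg ‖x - y‖))
      linarith
    calc ∫⁻ ω, ENNReal.ofReal (‖Ybar x k ω - Ybar y k ω‖ ^ 2) ∂P
        ≤ ∫⁻ ω, ∑ p, f p (fun l => Z l ω) * g p (fun l => J l ω) ∂P := lintegral_mono hpt
      _ = ∑ p, ∫⁻ ω, f p (fun l => Z l ω) * g p (fun l => J l ω) ∂P :=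
        lintegral_finsetSum _ fun p _ => ((hfm p).comp hZm).mul ((hgm p).comp hJm)
      _ ≤ ∑ p, ENNReal.ofReal ((((if extPath i k p 0 = i then (1 : ℝ) else 0) *
          ∏ l ∈ Finset.range k, matExp (δ • Q) (extPath i k p l) (extPath i k p (l + 1))) *
          (∏ l ∈ Finset.range k, Real.exp (δ * β (extPath i k p l) + δ ^ 2 * L ^ 2)) *
          ξ (extPath i k p k)) * (ξbar * ‖x - y‖ ^ 2)) := Finset.sum_le_sum fun p _ => hterm p
      _ ≤ ENNReal.ofReal (ξhat * ξbar * ‖x - y‖ ^ 2 * ρ ^ k) := by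
        rw [← ENNReal.ofReal_sum_of_nonneg]
        · refine ENNReal.ofReal_le_ofReal ?_
          rw [← Finset.sum_mul]
          have hs := path_sum_le i (fun a c => matExp (δ • Q) a c) hTnn
            (fun a => Real.exp (δ * β a + δ ^ 2 * L ^ 2)) ξ (fun a => (Real.exp_pos _).le) ρ
            (Real.exp_pos _).le hstep k
          refine (mul_le_mul_of_nonneg_right hs (by positivity)).trans ?_
          have h6 := mul_le_mul_of_nonneg_left (hhat i)
            (show 0 ≤ ρ ^ k * (ξbar * ‖x - y‖ ^ 2) by positivity)
          linarith
        · intro p _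
          refine mul_nonneg (mul_nonneg (mul_nonneg (mul_nonneg ?_ ?_) ?_) ?_) (by positivity)
          · split_ifs <;> norm_num
          · exact Finset.prod_nonneg fun l _ => hTnn _ _
          · exact Finset.prod_nonneg fun l _ => (Real.exp_pos _).le
          · exact (hξpos _).le
  by_cases hint : Integrable (fun ω => ‖Ybar x k ω - Ybar y k ω‖ ^ 2) P
  · rw [← ofReal_integral_eq_lintegral_ofReal hint
      (Filter.Eventually.of_forall fun ω => sq_nonneg _)] at hmain
    exact (ENNReal.ofReal_le_ofReal_iff hR).1 hmain
  · rw [integral_undef hint]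
    exact hR
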